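/- For all r₁, r₂ > 0 and every φ ∈ ℤ, ∑_{ψ∈ℤ} r₂^{|ψ|} r₁^{|φ−ψ|} / (|ψ|! |φ−ψ|!) ≤ (1 + e^{r₁+r₂}) (r₁+r₂)^{|φ|} / |φ|!. -/

import Mathlib

/-!
Group the integers `ψ` by the total degree `|ψ| + |φ - ψ|`, which takes the values `n + 2 k` with
`n = |φ|`. The degree `n` part is the binomial expansion of `(r₁ + r₂) ^ n / n!`. For `k ≥ 1`
exactly two integers have degree `n + 2 k`, and since `2 * centralBinom k ≤ 4 ^ k` and
`4 r₁ r₂ ≤ (r₁ + r₂) ^ 2`, their terms add up to at most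
`(r₁ + r₂) ^ n / n! * ((r₁ + r₂) ^ (2 k) / (2 k)!)`. Summing over `k` gives the factor
`cosh (r₁ + r₂)`.
-/

open Finset

section Factorial

open Nat

theorem centralBinom_succ_eq_two_mul_choose (j : ℕ) :
    (j + 1).centralBinom = 2 * (2 * j + 1).choose j := by
  rw [centralBinom_eq_two_mul_choose, mul_add_one, choose_succ_succ', choose_symm_half, ← two_mul]

theorem two_mul_centralBinom_le_four_pow {k : ℕ} (hk : k ≠ 0) : 2 * k.centralBinom ≤ 4 ^ k := by
  obtain ⟨j, rfl⟩ := exists_eq_succ_of_ne_zero hk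
  calc 2 * (j + 1).centralBinom
      = 4 * (2 * j + 1).choose j := by rw [centralBinom_succ_eq_two_mul_choose]; ring
    _ ≤ 4 * 4 ^ j := by gcongr; exact choose_middle_le_pow j
    _ = 4 ^ (j + 1) := (pow_succ' 4 j).symm

theorem sum_range_pow_div_factorial_mul {K : Type*} [Field K] [CharZero K] (a b : K) (n : ℕ) :
    ∑ i ∈ range (n + 1), a ^ i / i ! * (b ^ (n - i) / (n - i)!) = (a + b) ^ n / n ! := by
  rw [add_pow, sum_div]
  refine sum_congr rfl fun i hi => ?_
  rw [cast_choose K (mem_range_succ_iff.1 hi)]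
  have : (n ! : K) ≠ 0 := cast_ne_zero.2 n.factorial_ne_zero
  field_simp

theorem pow_add_pow_le_two_mul_add_pow {R : Type*} [Semiring R] [PartialOrder R]
    [IsOrderedRing R] {a b : R} (ha : 0 ≤ a) (hb : 0 ≤ b) (n : ℕ) :
    a ^ n + b ^ n ≤ 2 * (a + b) ^ n := by
  rw [two_mul]
  gcongr
  · exact le_add_of_nonneg_right hb
  · exact le_add_of_nonneg_left ha

section OrderedField

variable {K : Type*} [Field K] [LinearOrder K] [IsStrictOrderedRing K] {a b : K}

theorem pow_add_div_factorial_le (ha : 0 ≤ a) (m n : ℕ) :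
    a ^ (m + n) / (m + n)! ≤ a ^ m / m ! * (a ^ n / n !) := by
  rw [_root_.div_mul_div_comm, ← pow_add]
  gcongr
  exact_mod_cast le_of_dvd (factorial_pos _) (factorial_mul_factorial_dvd_factorial_add m n)

theorem two_mul_pow_div_factorial_mul_le (ha : 0 ≤ a) (hb : 0 ≤ b) {k : ℕ} (hk : k ≠ 0) :
    2 * (a ^ k / k ! * (b ^ k / k !)) ≤ (a + b) ^ (2 * k) / (2 * k)! := by
  have centralBinom_eq : (k.centralBinom : K) = (2 * k)! / (k ! * k !) := by
    rw [centralBinom_eq_two_mul_choose, two_mul, cast_add_choose]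
  have centralBinom_le : (2 * k.centralBinom : K) ≤ 4 ^ k :=
    mod_cast two_mul_centralBinom_le_four_pow hk
  rw [le_div_iff₀ (by positivity)]
  calc 2 * (a ^ k / k ! * (b ^ k / k !)) * (2 * k)!
      = 2 * k.centralBinom * (a * b) ^ k := by rw [centralBinom_eq]; ring
    _ ≤ 4 ^ k * (a * b) ^ k := by gcongr
    _ = (4 * a * b) ^ k := by ring
    _ ≤ ((a + b) ^ 2) ^ k := by gcongr; exact four_mul_le_sq_add a b
    _ = (a + b) ^ (2 * k) := (pow_mul ..).symm

theorem pow_div_factorial_mul_add_mul_le (ha : 0 ≤ a) (hb : 0 ≤ b) (n : ℕ) {k : ℕ} (hk : k ≠ 0) :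
    a ^ (n + k) / (n + k)! * (b ^ k / k !) + a ^ k / k ! * (b ^ (n + k) / (n + k)!) ≤
      (a + b) ^ n / n ! * ((a + b) ^ (2 * k) / (2 * k)!) := by
  calc a ^ (n + k) / (n + k)! * (b ^ k / k !) + a ^ k / k ! * (b ^ (n + k) / (n + k)!)
      ≤ a ^ n / n ! * (a ^ k / k !) * (b ^ k / k !) +
          a ^ k / k ! * (b ^ n / n ! * (b ^ k / k !)) := by
        gcongr
        · exact pow_add_div_factorial_le ha n k
        · exact pow_add_div_factorial_le hb n k
    _ = (a ^ n + b ^ n) / n ! * (a ^ k / k ! * (b ^ k / k !)) := by ring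
    _ ≤ 2 * (a + b) ^ n / n ! * (a ^ k / k ! * (b ^ k / k !)) := by
        gcongr
        exact pow_add_pow_le_two_mul_add_pow ha hb n
    _ = (a + b) ^ n / n ! * (2 * (a ^ k / k ! * (b ^ k / k !))) := by ring
    _ ≤ (a + b) ^ n / n ! * ((a + b) ^ (2 * k) / (2 * k)!) := by
        gcongr
        exact two_mul_pow_div_factorial_mul_le ha hb hk

end OrderedField

theorem tsum_int_eq_sum_range_add_tsum {G : Type*} [AddCommGroup G] [UniformSpace G]
    [IsUniformAddGroup G] [CompleteSpace G] [T2Space G] {f : ℤ → G} (hf : Summable f) (n : ℕ) :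
    ∑' m, f m = ∑ i ∈ range n, f i + ∑' j : ℕ, (f ↑(j + n) + f (-(j + 1))) := by
  have hnat : Summable fun m : ℕ => f m := hf.comp_injective cast_injective
  have hneg : Summable fun m : ℕ => f (-(m + 1)) :=
    hf.comp_injective (i := fun m : ℕ => -((m : ℤ) + 1)) fun _ _ h => by simpa using h
  rw [tsum_of_nat_of_neg_add_one hnat hneg, ← hnat.sum_add_tsum_nat_add n, add_assoc,
    ((summable_nat_add_iff n).2 hnat).tsum_add hneg]

theorem hasSum_cosh_sub_one (s : ℝ) :
    HasSum (fun j : ℕ => s ^ (2 * (j + 1)) / (2 * (j + 1))!) (Real.cosh s - 1) := by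
  simpa using (hasSum_nat_add_iff' 1).2 (Real.hasSum_cosh s)

theorem cosh_le_one_add_exp {s : ℝ} (hs : 0 ≤ s) : Real.cosh s ≤ 1 + Real.exp s := by
  rw [Real.cosh_eq]
  linarith [Real.exp_pos s, Real.exp_le_one_iff.2 (neg_nonpos.2 hs)]

/-- The exponential series weight `r ^ |m| / |m|!`, extended evenly from `ℕ` to `ℤ`; the sum
bounded here is the convolution over `ℤ` of two such weights. -/
noncomputable def expWeight (r : ℝ) (m : ℤ) : ℝ := r ^ m.natAbs / m.natAbs !

theorem expWeight_neg (r : ℝ) (m : ℤ) : expWeight r (-m) = expWeight r m := by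
  simp only [expWeight, Int.natAbs_neg]

theorem expWeight_nonneg {r : ℝ} (hr : 0 ≤ r) (m : ℤ) : 0 ≤ expWeight r m := by
  rw [expWeight]
  positivity

theorem summable_expWeight (r : ℝ) : Summable (expWeight r) :=
  .of_nat_of_neg (by simpa [expWeight] using Real.summable_pow_div_factorial r)
    (by simpa [expWeight] using Real.summable_pow_div_factorial r)

theorem norm_expWeight_le_exp (r : ℝ) (m : ℤ) : ‖expWeight r m‖ ≤ Real.exp |r| := by
  simpa [expWeight] using Real.pow_div_factorial_le_exp |r| (abs_nonneg r) m.natAbs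

theorem summable_expWeight_mul (a b : ℝ) (m : ℤ) :
    Summable fun ψ => expWeight a ψ * expWeight b (m - ψ) :=
  .of_norm_bounded ((summable_expWeight a).norm.mul_right (Real.exp |b|)) fun ψ => by
    rw [norm_mul]
    gcongr
    exact norm_expWeight_le_exp b (m - ψ)

theorem tsum_expWeight_mul_neg (a b : ℝ) (m : ℤ) :
    ∑' ψ, expWeight a ψ * expWeight b (-m - ψ) = ∑' ψ, expWeight a ψ * expWeight b (m - ψ) := by
  rw [← (Equiv.neg ℤ).tsum_eq]
  refine tsum_congr fun ψ => ?_
  rw [Equiv.neg_apply, ← neg_sub', expWeight_neg, expWeight_neg]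

theorem sum_range_expWeight_mul (a b : ℝ) (n : ℕ) :
    ∑ i ∈ range (n + 1), expWeight a i * expWeight b (n - i) = expWeight (a + b) n := by
  refine .trans (sum_congr rfl fun i hi => ?_) (sum_range_pow_div_factorial_mul a b n)
  rw [← cast_sub (mem_range_succ_iff.1 hi)]
  rfl

theorem expWeight_mul_add_mul_le {a b : ℝ} (ha : 0 ≤ a) (hb : 0 ≤ b) (n j : ℕ) :
    expWeight a ↑(j + (n + 1)) * expWeight b (n - ↑(j + (n + 1))) +
        expWeight a (-(j + 1)) * expWeight b (n - -(j + 1)) ≤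
      expWeight (a + b) n * ((a + b) ^ (2 * (j + 1)) / (2 * (j + 1))!) := by
  have natAbs_sub_right : ((n : ℤ) - ↑(n + (j + 1))).natAbs = j + 1 := by lia
  have natAbs_left : (-(j + 1) : ℤ).natAbs = j + 1 := by lia
  have natAbs_sub_left : ((n : ℤ) - -(j + 1)).natAbs = n + (j + 1) := by lia
  simp only [expWeight, add_left_comm j n 1, Int.natAbs_natCast, natAbs_sub_right, natAbs_left,
    natAbs_sub_left]
  exact pow_div_factorial_mul_add_mul_le ha hb n j.succ_ne_zero

theorem tsum_expWeight_mul_natCast_le {a b : ℝ} (ha : 0 ≤ a) (hb : 0 ≤ b) (n : ℕ) :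
    ∑' ψ, expWeight a ψ * expWeight b (n - ψ) ≤ expWeight (a + b) n * Real.cosh (a + b) := by
  set f : ℤ → ℝ := fun ψ => expWeight a ψ * expWeight b (n - ψ)
  have f_nonneg (ψ : ℤ) : 0 ≤ f ψ := mul_nonneg (expWeight_nonneg ha _) (expWeight_nonneg hb _)
  have pair_le (j : ℕ) : f ↑(j + (n + 1)) + f (-(j + 1)) ≤
      expWeight (a + b) n * ((a + b) ^ (2 * (j + 1)) / (2 * (j + 1))!) :=
    expWeight_mul_add_mul_le ha hb n j
  have hcosh := (hasSum_cosh_sub_one (a + b)).mul_left (expWeight (a + b) n)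
  have hpair : Summable fun j : ℕ => f ↑(j + (n + 1)) + f (-(j + 1)) :=
    .of_nonneg_of_le (fun _ => add_nonneg (f_nonneg _) (f_nonneg _)) pair_le hcosh.summable
  calc ∑' ψ, f ψ
      = expWeight (a + b) n + ∑' j : ℕ, (f ↑(j + (n + 1)) + f (-(j + 1))) := by
        rw [tsum_int_eq_sum_range_add_tsum (summable_expWeight_mul a b n) (n + 1),
          sum_range_expWeight_mul]
    _ ≤ expWeight (a + b) n + expWeight (a + b) n * (Real.cosh (a + b) - 1) := by
        gcongr
        exact hasSum_le pair_le hpair.hasSum hcosh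
    _ = expWeight (a + b) n * Real.cosh (a + b) := by ring

end Factorial

theorem tsum_int_convolution_bound_general {r₁ r₂ : ℝ} (h₁ : 0 ≤ r₁) (h₂ : 0 ≤ r₂) (φ : ℤ) :
    ∑' ψ, expWeight r₂ ψ * expWeight r₁ (φ - ψ) ≤
      Real.cosh (r₁ + r₂) * expWeight (r₁ + r₂) φ := by
  rw [mul_comm, add_comm r₁]
  obtain ⟨n, rfl | rfl⟩ := φ.eq_nat_or_neg
  · exact tsum_expWeight_mul_natCast_le h₂ h₁ n
  · rw [tsum_expWeight_mul_neg, expWeight_neg]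
    exact tsum_expWeight_mul_natCast_le h₂ h₁ n

/-- For all `r₁, r₂ > 0` and every `φ ∈ ℤ`,
`∑_{ψ∈ℤ} r₂^|ψ| r₁^|φ−ψ| / (|ψ|! |φ−ψ|!) ≤ (1 + e^(r₁+r₂)) (r₁+r₂)^|φ| / |φ|!`. -/
theorem tsum_int_convolution_bound (r₁ r₂ : ℝ) (h₁ : 0 < r₁) (h₂ : 0 < r₂) (φ : ℤ) :
    (∑' ψ : ℤ, r₂ ^ ψ.natAbs * r₁ ^ (φ - ψ).natAbs /
        ((ψ.natAbs.factorial : ℝ) * ((φ - ψ).natAbs.factorial : ℝ))) ≤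
      (1 + Real.exp (r₁ + r₂)) * (r₁ + r₂) ^ φ.natAbs / (φ.natAbs.factorial : ℝ) := by
  simp_rw [mul_div_mul_comm]
  rw [mul_div_assoc]
  exact (tsum_int_convolution_bound_general h₁.le h₂.le φ).trans <|
    mul_le_mul_of_nonneg_right (cosh_le_one_add_exp (by positivity))
      (expWeight_nonneg (by positivity) φ)
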